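/- Let C be a regular Ord-category and consider ideals R: X ↬ Y, S: Z ↬ Y and T: Z ↬ W. Then T∘S°∘R ≅ T∘S^*∘R; in particular, the composite relation T∘S°∘R is an ideal. -/

import Mathlib

open CategoryTheory

universe w v u

/-- An `Ord`-enrichment of a category: a preorder on each hom-set,
preserved by composition on both sides. -/
class OrdEnrichment (C : Type u) [Category.{v} C] : Type (max u v) where
  ord : ∀ {X Y : C}, (X ⟶ Y) → (X ⟶ Y) → Prop
  ord_refl : ∀ {X Y : C} (f : X ⟶ Y), ord f f
  ord_trans : ∀ {X Y : C} {f g h : X ⟶ Y}, ord f g → ord g h → ord f h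
  precomp_ord : ∀ {X Y Z : C} (e : X ⟶ Y) {f g : Y ⟶ Z}, ord f g → ord (e ≫ f) (e ≫ g)
  postcomp_ord : ∀ {X Y Z : C} {f g : X ⟶ Y} (h : Y ⟶ Z), ord f g → ord (f ≫ h) (g ≫ h)

/-- The preorder on hom-sets of an `Ord`-category. -/
def homLe {C : Type u} [Category.{v} C] [OrdEnrichment C] {X Y : C} (f g : X ⟶ Y) : Prop :=
  OrdEnrichment.ord f g

infixl:50 " ≼ " => homLe

section

variable {C : Type u} [Category.{v} C] [OrdEnrichment C]

/-- A full (ff-) morphism. -/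
def IsFF {X Y : C} (m : X ⟶ Y) : Prop :=
  ∀ {A : C} (a a' : A ⟶ X), (a ≫ m) ≼ (a' ≫ m) → a ≼ a'

/-- An ff-monomorphism: a full monomorphism. -/
def IsFFMono {X Y : C} (m : X ⟶ Y) : Prop := IsFF m ∧ Mono m

/-- An so-morphism: a morphism left orthogonal to every ff-monomorphism. -/
def IsSO {A B : C} (e : A ⟶ B) : Prop :=
  ∀ {X Y : C} (m : X ⟶ Y), IsFFMono m → ∀ (u : A ⟶ X) (v : B ⟶ Y),
    u ≫ m = e ≫ v → ∃ d : B ⟶ X, e ≫ d = u ∧ d ≫ m = v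

/-- The (strict) comma object square for the ordered pair `(f, g)`. -/
structure IsCommaSq {X Y Z : C} (f : X ⟶ Y) (g : Z ⟶ Y) (P : C)
    (π₁ : P ⟶ X) (π₂ : P ⟶ Z) : Prop where
  le : (π₁ ≫ f) ≼ (π₂ ≫ g)
  lift : ∀ {A : C} (α : A ⟶ X) (β : A ⟶ Z), (α ≫ f) ≼ (β ≫ g) →
    ∃! h : A ⟶ P, h ≫ π₁ = α ∧ h ≫ π₂ = β
  lift_ord : ∀ {A : C} {h h' : A ⟶ P}, (h ≫ π₁) ≼ (h' ≫ π₁) → (h ≫ π₂) ≼ (h' ≫ π₂) → h ≼ h'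

/-- A 2-pullback square (pullback with the `Ord`-enriched universal property). -/
structure Is2Pullback {X Y Z : C} (f : X ⟶ Z) (g : Y ⟶ Z) (P : C)
    (p : P ⟶ X) (q : P ⟶ Y) : Prop where
  comm : p ≫ f = q ≫ g
  lift : ∀ {A : C} (a : A ⟶ X) (b : A ⟶ Y), a ≫ f = b ≫ g →
    ∃! h : A ⟶ P, h ≫ p = a ∧ h ≫ q = b
  lift_ord : ∀ {A : C} {h h' : A ⟶ P}, (h ≫ p) ≼ (h' ≫ p) → (h ≫ q) ≼ (h' ≫ q) → h ≼ h'

/-- A binary 2-product. -/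
structure Is2Product (X Y : C) (P : C) (p : P ⟶ X) (q : P ⟶ Y) : Prop where
  lift : ∀ {A : C} (a : A ⟶ X) (b : A ⟶ Y), ∃! h : A ⟶ P, h ≫ p = a ∧ h ≫ q = b
  lift_ord : ∀ {A : C} {h h' : A ⟶ P}, (h ≫ p) ≼ (h' ≫ p) → (h ≫ q) ≼ (h' ≫ q) → h ≼ h'

/-- A 2-equalizer. -/
structure Is2Equalizer {X Y : C} (f g : X ⟶ Y) (E : C) (i : E ⟶ X) : Prop where
  comm : i ≫ f = i ≫ g
  lift : ∀ {A : C} (a : A ⟶ X), a ≫ f = a ≫ g → ∃! h : A ⟶ E, h ≫ i = a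
  lift_ord : ∀ {A : C} {h h' : A ⟶ E}, (h ≫ i) ≼ (h' ≫ i) → h ≼ h'

/-- A bicoinserter of a parallel pair. -/
structure IsBicoinserter {X A E : C} (a b : X ⟶ A) (e : A ⟶ E) : Prop where
  le : (a ≫ e) ≼ (b ≫ e)
  desc : ∀ {F : C} (f : A ⟶ F), (a ≫ f) ≼ (b ≫ f) →
    ∃ t : E ⟶ F, (e ≫ t) ≼ f ∧ f ≼ (e ≫ t)
  desc_ord : ∀ {F : C} {f f' : A ⟶ F} {t t' : E ⟶ F},
    (e ≫ t) ≼ f → f ≼ (e ≫ t) → (e ≫ t') ≼ f' → f' ≼ (e ≫ t') → f ≼ f' → t ≼ t'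

/-- A relation from `X` to `Y` in an `Ord`-category: a jointly ff-monomorphic span. -/
structure RelStr (X Y : C) : Type (max u v) where
  obj : C
  p : obj ⟶ X
  q : obj ⟶ Y
  jointly_ff : ∀ {A : C} (a a' : A ⟶ obj), (a ≫ p) ≼ (a' ≫ p) → (a ≫ q) ≼ (a' ≫ q) → a ≼ a'
  jointly_mono : ∀ {A : C} (a a' : A ⟶ obj), a ≫ p = a' ≫ p → a ≫ q = a' ≫ q → a = a'

/-- `(x, y) ∈_A R`. -/
def RelStr.Mem {X Y : C} (R : RelStr X Y) {A : C} (x : A ⟶ X) (y : A ⟶ Y) : Prop :=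
  ∃ h : A ⟶ R.obj, h ≫ R.p = x ∧ h ≫ R.q = y

/-- `R ⊆ S`: `R` factors through `S` (over `X × Y`). -/
def RelStr.Sub {X Y : C} (R S : RelStr X Y) : Prop :=
  ∃ φ : R.obj ⟶ S.obj, φ ≫ S.p = R.p ∧ φ ≫ S.q = R.q

/-- `R ≅ S`: mutual factorisation. -/
def RelStr.Iso {X Y : C} (R S : RelStr X Y) : Prop := R.Sub S ∧ S.Sub R

/-- The opposite relation `R°`. -/
def RelStr.op {X Y : C} (R : RelStr X Y) : RelStr Y X where
  obj := R.obj
  p := R.q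
  q := R.p
  jointly_ff := fun a a' h1 h2 => R.jointly_ff a a' h2 h1
  jointly_mono := fun a a' h1 h2 => R.jointly_mono a a' h2 h1

/-- A relation is an (order) ideal when it is closed under lowering the first
coordinate and raising the second coordinate. -/
def IsIdealRel {X Y : C} (R : RelStr X Y) : Prop :=
  ∀ {A : C} (x x' : A ⟶ X) (y y' : A ⟶ Y), x' ≼ x → R.Mem x y → y ≼ y' → R.Mem x' y'

/-- The relation `f_♯` given by the span `(1_X, f)`. -/
def sharpRel {X Y : C} (f : X ⟶ Y) : RelStr X Y where
  obj := X
  p := 𝟙 X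
  q := f
  jointly_ff := fun a a' h1 _ => by simpa using h1
  jointly_mono := fun a a' h1 _ => by simpa using h1

/-- The relation `f°`, the opposite of `f_♯`. -/
def cosharpRel {X Y : C} (f : X ⟶ Y) : RelStr Y X := (sharpRel f).op

/-- `M` is the meet (intersection) `R ∧ S` of two relations. -/
def IsMeetRel {X Y : C} (R S M : RelStr X Y) : Prop :=
  M.Sub R ∧ M.Sub S ∧
    ∀ {A : C} (x : A ⟶ X) (y : A ⟶ Y), R.Mem x y → S.Mem x y → M.Mem x y

/-- `T` is the composite `S ∘ R` of the relations `R : X ↬ Y` and `S : Y ↬ Z`,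
obtained via the (so-morphism, ff-monomorphism) factorisation of the span
given by the 2-pullback over the middle object. -/
def IsCompositeRel {X Y Z : C} (R : RelStr X Y) (S : RelStr Y Z) (T : RelStr X Z) : Prop :=
  ∃ (P : C) (p₁ : P ⟶ R.obj) (p₂ : P ⟶ S.obj) (e : P ⟶ T.obj),
    Is2Pullback R.q S.p P p₁ p₂ ∧ IsSO e ∧ e ≫ T.p = p₁ ≫ R.p ∧ e ≫ T.q = p₂ ≫ S.q

/-- `R` is the ideal `f_* = f / 1_Y : X ↬ Y`. -/
def IsStarRel {X Y : C} (f : X ⟶ Y) (R : RelStr X Y) : Prop :=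
  IsCommaSq f (𝟙 Y) R.obj R.p R.q

/-- `R` is the ideal `f^* = 1_Y / f : Y ↬ X`. -/
def IsCostarRel {X Y : C} (f : X ⟶ Y) (R : RelStr Y X) : Prop :=
  IsCommaSq (𝟙 Y) f R.obj R.p R.q

/-- `R` is the identity ideal `I_X = 1_X / 1_X`. -/
def IsIdRel (X : C) (R : RelStr X X) : Prop :=
  IsCommaSq (𝟙 X) (𝟙 X) R.obj R.p R.q

/-- `S` is the 2-pullback of the relation `R ↣ X × Y` along `f × g`. -/
def IsRelPullback {X Y U V : C} (R : RelStr X Y) (f : U ⟶ X) (g : V ⟶ Y)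
    (S : RelStr U V) : Prop :=
  ∃ h : S.obj ⟶ R.obj, h ≫ R.p = S.p ≫ f ∧ h ≫ R.q = S.q ≫ g ∧
    ∀ {A : C} (a : A ⟶ U) (b : A ⟶ V) (c : A ⟶ R.obj),
      c ≫ R.p = a ≫ f → c ≫ R.q = b ≫ g →
      ∃ d : A ⟶ S.obj, d ≫ S.p = a ∧ d ≫ S.q = b ∧ d ≫ h = c

/-- A binary 2-coproduct. -/
structure Is2Coproduct (X Y : C) (P : C) (i : X ⟶ P) (j : Y ⟶ P) : Prop where
  desc : ∀ {A : C} (a : X ⟶ A) (b : Y ⟶ A), ∃! h : P ⟶ A, i ≫ h = a ∧ j ≫ h = b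
  desc_ord : ∀ {A : C} {h h' : P ⟶ A}, (i ≫ h) ≼ (i ≫ h') → (j ≫ h) ≼ (j ≫ h') → h ≼ h'

/-- A ternary 2-coproduct. -/
structure Is3Coproduct (X Y Z : C) (P : C) (i : X ⟶ P) (j : Y ⟶ P) (k : Z ⟶ P) : Prop where
  desc : ∀ {A : C} (a : X ⟶ A) (b : Y ⟶ A) (c : Z ⟶ A),
    ∃! h : P ⟶ A, i ≫ h = a ∧ j ≫ h = b ∧ k ≫ h = c
  desc_ord : ∀ {A : C} {h h' : P ⟶ A},
    (i ≫ h) ≼ (i ≫ h') → (j ≫ h) ≼ (j ≫ h') → (k ≫ h) ≼ (k ≫ h') → h ≼ h'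

/-- Reflexivity of a relation on `X`: the diagonal factors through it. -/
def ReflexiveRel {X : C} (R : RelStr X X) : Prop := R.Mem (𝟙 X) (𝟙 X)

/-- Transitivity of a relation on `X`: `R ∘ R ⊆ R`. -/
def TransitiveRel {X : C} (R : RelStr X X) : Prop :=
  ∀ T : RelStr X X, IsCompositeRel R R T → T.Sub R

/-- A congruence: a reflexive and transitive ideal. -/
def IsCongruence {X : C} (R : RelStr X X) : Prop :=
  IsIdealRel R ∧ ReflexiveRel R ∧ TransitiveRel R

/-- An effective congruence: `R ≅ f^* ∘ f_*` for some morphism `f`. -/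
def EffectiveCongruence {X : C} (R : RelStr X X) : Prop :=
  ∃ (Y : C) (f : X ⟶ Y) (Fstar : RelStr X Y) (Fco : RelStr Y X) (T : RelStr X X),
    IsStarRel f Fstar ∧ IsCostarRel f Fco ∧ IsCompositeRel Fstar Fco T ∧ R.Iso T

/-- The `Ord`-enriched difunctionality property of a relation. -/
def OrdDifunctional {X Y : C} (D : RelStr X Y) : Prop :=
  ∀ {A : C} (x u u' : A ⟶ X) (y y' v : A ⟶ Y),
    D.Mem x y → y ≼ y' → D.Mem u y' → u ≼ u' → D.Mem u' v → D.Mem x v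

end

/-- A regular `Ord`-category: finite weighted limits, an
(so-morphism, ff-monomorphism) factorisation system, so-morphisms stable under
2-pullbacks, and every so-morphism the bicoinserter of its comma object projections. -/
structure IsRegularOrd (C : Type u) [Category.{v} C] [OrdEnrichment C] : Prop where
  hasTerminal : ∃ T : C, ∀ A : C, ∃ f : A ⟶ T, ∀ g : A ⟶ T, g = f
  has2Products : ∀ X Y : C, ∃ (P : C) (p : P ⟶ X) (q : P ⟶ Y), Is2Product X Y P p q
  has2Equalizers : ∀ {X Y : C} (f g : X ⟶ Y), ∃ (E : C) (i : E ⟶ X), Is2Equalizer f g E i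
  has2Pullbacks : ∀ {X Y Z : C} (f : X ⟶ Z) (g : Y ⟶ Z),
    ∃ (P : C) (p : P ⟶ X) (q : P ⟶ Y), Is2Pullback f g P p q
  hasCommaObjects : ∀ {X Y Z : C} (f : X ⟶ Y) (g : Z ⟶ Y),
    ∃ (P : C) (p : P ⟶ X) (q : P ⟶ Z), IsCommaSq f g P p q
  fact : ∀ {X Y : C} (f : X ⟶ Y), ∃ (I : C) (e : X ⟶ I) (m : I ⟶ Y),
    IsSO e ∧ IsFFMono m ∧ e ≫ m = f
  so_pullback_stable : ∀ {X Y Z P : C} (f : X ⟶ Z) (g : Y ⟶ Z) (p : P ⟶ X) (q : P ⟶ Y),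
    Is2Pullback f g P p q → IsSO g → IsSO p
  so_bicoinserter : ∀ {A B P : C} (e : A ⟶ B), IsSO e →
    ∀ (π₁ π₂ : P ⟶ A), IsCommaSq e e P π₁ π₂ → IsBicoinserter π₁ π₂ e

/-- An `Ord`-Mal'tsev category: every ideal is `Ord`-difunctional. -/
def IsOrdMaltsev (C : Type u) [Category.{v} C] [OrdEnrichment C] : Prop :=
  ∀ (X Y : C) (D : RelStr X Y), IsIdealRel D → OrdDifunctional D

/-- An `Ord`-W-Mal'tsev object: every ideal is `Ord`-difunctional with respect to
generalised elements with domain `Y`. -/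
def IsOrdWMaltsevObj {C : Type u} [Category.{v} C] [OrdEnrichment C] (Y : C) : Prop :=
  ∀ (X Z : C) (R : RelStr X Z), IsIdealRel R →
    ∀ (x u u' : Y ⟶ X) (z z' v : Y ⟶ Z),
      R.Mem x z → z ≼ z' → R.Mem u z' → u ≼ u' → R.Mem u' v → R.Mem x v


/-! Relations are handled through generalised elements: `(x, z)` belongs to a composite exactly
when, after pulling back along some so-morphism, a middle element linking `x` to `z` exists. In
these terms `(y, z) ∈ S^*` means that locally `y ≼ y'` and `z' ≼ z` for some `(z', y') ∈ S`. In
the composite `T ∘ S^* ∘ R` the inequality `y ≼ y'` is absorbed by `R` and `z' ≼ z` by `T`, which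
leaves an element of `T ∘ S° ∘ R`. -/

section

open Limits

variable {C : Type u} [Category.{v} C] [OrdEnrichment C] {X Y Z W : C}

/-- The so-morphisms form a (singleton) coverage: along any morphism into its codomain, an
so-morphism can be completed to a commutative square with an so-morphism opposite to it. This is
what makes it possible to refine generalised elements. -/
def SOFormCoverage (C : Type u) [Category.{v} C] [OrdEnrichment C] : Prop :=
  ∀ {A B D : C} (f : A ⟶ D) (e : B ⟶ D), IsSO e →
    ∃ (P : C) (e' : P ⟶ A) (f' : P ⟶ B), IsSO e' ∧ e' ≫ f = f' ≫ e

theorem IsRegularOrd.soFormCoverage (hC : IsRegularOrd C) : SOFormCoverage C := by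
  intro A B D f e he
  obtain ⟨P, e', f', hP⟩ := hC.has2Pullbacks f e
  exact ⟨P, e', f', hC.so_pullback_stable f e e' f' hP he, hP.comm⟩

theorem Is2Product.hasLimit_pair {P : C} {p : P ⟶ X} {q : P ⟶ Y} (hP : Is2Product X Y P p q) :
    HasLimit (pair X Y) := by
  choose lift hlift huniq using fun {A : C} (a : A ⟶ X) (b : A ⟶ Y) => hP.lift a b
  exact ⟨⟨BinaryFan.mk p q, BinaryFan.IsLimit.mk _ lift (fun a b => (hlift a b).1)
    (fun a b => (hlift a b).2) fun a b m ha hb => huniq a b m ⟨ha, hb⟩⟩⟩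

theorem IsRegularOrd.hasBinaryProducts (hC : IsRegularOrd C) : HasBinaryProducts C := by
  have (X Y : C) : HasLimit (pair X Y) := by
    obtain ⟨P, p, q, hP⟩ := hC.has2Products X Y
    exact hP.hasLimit_pair
  exact hasBinaryProducts_of_hasLimit_pair C

theorem IsSO.comp {A B D : C} {e : A ⟶ B} {f : B ⟶ D} (he : IsSO e) (hf : IsSO f) :
    IsSO (e ≫ f) := by
  intro X Y m hm u v huv
  obtain ⟨d, rfl, hd⟩ := he m hm u (f ≫ v) (by rw [huv, Category.assoc])
  obtain ⟨d', rfl, hd'⟩ := hf m hm d v hd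
  exact ⟨d', Category.assoc _ _ _, hd'⟩

namespace homLe

theorem refl (f : X ⟶ Y) : f ≼ f :=
  OrdEnrichment.ord_refl f

theorem precomp {f g : Y ⟶ Z} (h : f ≼ g) (e : X ⟶ Y) : (e ≫ f) ≼ (e ≫ g) :=
  OrdEnrichment.precomp_ord e h

theorem postcomp {f g : X ⟶ Y} (h : f ≼ g) (k : Y ⟶ Z) : (f ≫ k) ≼ (g ≫ k) :=
  OrdEnrichment.postcomp_ord k h

end homLe

namespace RelStr

theorem mem_self (R : RelStr X Y) : R.Mem R.p R.q :=
  ⟨𝟙 _, Category.id_comp _, Category.id_comp _⟩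

theorem Mem.precomp {R : RelStr X Y} {A B : C} {x : A ⟶ X} {y : A ⟶ Y} (h : R.Mem x y)
    (e : B ⟶ A) : R.Mem (e ≫ x) (e ≫ y) := by
  obtain ⟨k, rfl, rfl⟩ := h
  exact ⟨e ≫ k, Category.assoc _ _ _, Category.assoc _ _ _⟩

theorem mem_op_iff {R : RelStr X Y} {A : C} {x : A ⟶ X} {y : A ⟶ Y} :
    R.op.Mem y x ↔ R.Mem x y :=
  exists_congr fun _ => and_comm

theorem Sub.refl (R : RelStr X Y) : R.Sub R :=
  R.mem_self

theorem Sub.mem {R S : RelStr X Y} (h : R.Sub S) {A : C} {x : A ⟶ X} {y : A ⟶ Y}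
    (hxy : R.Mem x y) : S.Mem x y := by
  obtain ⟨k, rfl, rfl⟩ := hxy
  exact Mem.precomp h k

theorem isFFMono_prodLift (R : RelStr X Y) [HasBinaryProduct X Y] :
    IsFFMono (prod.lift R.p R.q) := by
  refine ⟨fun a a' h => R.jointly_ff a a' ?_ ?_, ⟨fun a a' h => R.jointly_mono a a' ?_ ?_⟩⟩
  · simpa only [Category.assoc, prod.lift_fst] using h.postcomp prod.fst
  · simpa only [Category.assoc, prod.lift_snd] using h.postcomp prod.snd
  · simpa only [Category.assoc, prod.lift_fst] using congrArg (· ≫ prod.fst) h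
  · simpa only [Category.assoc, prod.lift_snd] using congrArg (· ≫ prod.snd) h

theorem Mem.of_so {R : RelStr X Y} [HasBinaryProduct X Y] {A B : C} {e : B ⟶ A} (he : IsSO e)
    {x : A ⟶ X} {y : A ⟶ Y} (h : R.Mem (e ≫ x) (e ≫ y)) : R.Mem x y := by
  obtain ⟨k, hkx, hky⟩ := h
  have hk : k ≫ prod.lift R.p R.q = e ≫ prod.lift x y := by
    rw [prod.comp_lift, prod.comp_lift, hkx, hky]
  obtain ⟨d, -, hd⟩ := he _ R.isFFMono_prodLift k _ hk
  refine ⟨d, ?_, ?_⟩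
  · simpa only [Category.assoc, prod.lift_fst] using congrArg (· ≫ prod.fst) hd
  · simpa only [Category.assoc, prod.lift_snd] using congrArg (· ≫ prod.snd) hd

end RelStr

namespace IsCompositeRel

variable {R : RelStr X Y} {S : RelStr Y Z} {T : RelStr X Z}

theorem mem (hT : IsCompositeRel R S T) {A : C} {x : A ⟶ X} {y : A ⟶ Y} {z : A ⟶ Z}
    (hxy : R.Mem x y) (hyz : S.Mem y z) : T.Mem x z := by
  obtain ⟨P, p₁, p₂, e, hP, -, hp, hq⟩ := hT
  obtain ⟨a, rfl, ha⟩ := hxy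
  obtain ⟨b, hb, rfl⟩ := hyz
  obtain ⟨k, ⟨rfl, rfl⟩, -⟩ := hP.lift a b (ha.trans hb.symm)
  exact ⟨k ≫ e, by simp only [Category.assoc, hp], by simp only [Category.assoc, hq]⟩

theorem exists_mem_of_mem (hso : SOFormCoverage C) (hT : IsCompositeRel R S T) {A : C} {x : A ⟶ X}
    {z : A ⟶ Z} (h : T.Mem x z) :
    ∃ (B : C) (e : B ⟶ A) (y : B ⟶ Y), IsSO e ∧ R.Mem (e ≫ x) y ∧ S.Mem y (e ≫ z) := by
  obtain ⟨P, p₁, p₂, e, hP, he, hp, hq⟩ := hT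
  obtain ⟨k, rfl, rfl⟩ := h
  obtain ⟨B, e', k', he', hcomm⟩ := hso k e he
  refine ⟨B, e', k' ≫ p₁ ≫ R.q, he', ⟨k' ≫ p₁, ?_, Category.assoc _ _ _⟩, ⟨k' ≫ p₂, ?_, ?_⟩⟩
  · rw [Category.assoc, ← hp, ← reassoc_of% hcomm]
  · rw [Category.assoc, hP.comm]
  · rw [Category.assoc, ← hq, ← reassoc_of% hcomm]

theorem sub_of_forall_mem [HasBinaryProduct X Z] (hT : IsCompositeRel R S T) {U : RelStr X Z}
    (hU : ∀ {A : C} {x : A ⟶ X} {y : A ⟶ Y} {z : A ⟶ Z}, R.Mem x y → S.Mem y z → U.Mem x z) :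
    T.Sub U := by
  obtain ⟨P, p₁, p₂, e, hP, he, hp, hq⟩ := hT
  have hPU : U.Mem (e ≫ T.p) (e ≫ T.q) := by
    rw [hp, hq]
    refine hU (R.mem_self.precomp p₁) ?_
    rw [hP.comm]
    exact S.mem_self.precomp p₂
  exact RelStr.Mem.of_so he hPU

theorem sub_of_sub [HasBinaryProduct X Z] {R' : RelStr X Y} {S' : RelStr Y Z} {T' : RelStr X Z}
    (hT : IsCompositeRel R S T) (hT' : IsCompositeRel R' S' T') (hR : R.Sub R') (hS : S.Sub S') :
    T.Sub T' :=
  hT.sub_of_forall_mem fun hxy hyz => hT'.mem (hR.mem hxy) (hS.mem hyz)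

end IsCompositeRel

/-- The lower half of the ideal condition: closure under lowering the first coordinate. -/
def IsLowerRel (R : RelStr X Y) : Prop :=
  ∀ {A : C} {x x' : A ⟶ X} {y : A ⟶ Y}, x' ≼ x → R.Mem x y → R.Mem x' y

/-- The upper half of the ideal condition: closure under raising the second coordinate. -/
def IsUpperRel (R : RelStr X Y) : Prop :=
  ∀ {A : C} {x : A ⟶ X} {y y' : A ⟶ Y}, y ≼ y' → R.Mem x y → R.Mem x y'

theorem isIdealRel_iff_isLowerRel_and_isUpperRel {R : RelStr X Y} :
    IsIdealRel R ↔ IsLowerRel R ∧ IsUpperRel R where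
  mp hR := ⟨fun hx h => hR _ _ _ _ hx h (.refl _),
    fun hy h => hR _ _ _ _ (.refl _) h hy⟩
  mpr hR _ _ _ _ _ hx h hy := hR.1 hx (hR.2 hy h)

theorem IsCompositeRel.isLowerRel [HasBinaryProduct X Z] (hso : SOFormCoverage C)
    {R : RelStr X Y} {S : RelStr Y Z} {T : RelStr X Z} (hT : IsCompositeRel R S T)
    (hR : IsLowerRel R) : IsLowerRel T := by
  intro A x x' z hx h
  obtain ⟨B, e, y, he, hxy, hyz⟩ := hT.exists_mem_of_mem hso h
  exact .of_so he (hT.mem (hR (hx.precomp e) hxy) hyz)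

theorem IsCompositeRel.isUpperRel [HasBinaryProduct X Z] (hso : SOFormCoverage C)
    {R : RelStr X Y} {S : RelStr Y Z} {T : RelStr X Z} (hT : IsCompositeRel R S T)
    (hS : IsUpperRel S) : IsUpperRel T := by
  intro A x z z' hz h
  obtain ⟨B, e, y, he, hxy, hyz⟩ := hT.exists_mem_of_mem hso h
  exact .of_so he (hT.mem hxy (hS (hz.precomp e) hyz))

theorem IsCommaSq.exists_lift_iff {P : C} {f : X ⟶ Y} {g : Z ⟶ Y} {π₁ : P ⟶ X} {π₂ : P ⟶ Z}
    (hP : IsCommaSq f g P π₁ π₂) {A : C} {x : A ⟶ X} {z : A ⟶ Z} :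
    (∃ h : A ⟶ P, h ≫ π₁ = x ∧ h ≫ π₂ = z) ↔ (x ≫ f) ≼ (z ≫ g) := by
  refine ⟨?_, fun h => (hP.lift x z h).exists⟩
  rintro ⟨h, rfl, rfl⟩
  simpa only [Category.assoc] using hP.le.precomp h

theorem IsStarRel.mem_iff {f : X ⟶ Y} {F : RelStr X Y} (hF : IsStarRel f F) {A : C} {x : A ⟶ X}
    {y : A ⟶ Y} : F.Mem x y ↔ (x ≫ f) ≼ y := by
  have := IsCommaSq.exists_lift_iff hF (x := x) (z := y)
  rwa [Category.comp_id] at this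

theorem IsCostarRel.mem_iff {f : X ⟶ Y} {F : RelStr Y X} (hF : IsCostarRel f F) {A : C}
    {y : A ⟶ Y} {x : A ⟶ X} : F.Mem y x ↔ y ≼ (x ≫ f) := by
  have := IsCommaSq.exists_lift_iff hF (x := y) (z := x)
  rwa [Category.comp_id] at this

/-- `U` is the relation `S^* = (s₁)_* ∘ (s₂)^*` attached to `S = ⟨s₁, s₂⟩`, for some choice of the
two comma objects and of the composite. -/
def IsUpperStarRel (S : RelStr Z Y) (U : RelStr Y Z) : Prop :=
  ∃ (S1star : RelStr S.obj Z) (S2co : RelStr Y S.obj),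
    IsStarRel S.p S1star ∧ IsCostarRel S.q S2co ∧ IsCompositeRel S2co S1star U

namespace IsUpperStarRel

variable {S : RelStr Z Y} {U : RelStr Y Z}

theorem mem_of_le (hU : IsUpperStarRel S U) {A : C} {y y' : A ⟶ Y} {z z' : A ⟶ Z} (hy : y ≼ y')
    (h : S.Mem z' y') (hz : z' ≼ z) : U.Mem y z := by
  obtain ⟨S1star, S2co, hS1star, hS2co, hcomp⟩ := hU
  obtain ⟨s, rfl, rfl⟩ := h
  exact hcomp.mem (hS2co.mem_iff.mpr hy) (hS1star.mem_iff.mpr hz)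

theorem exists_le_mem_le_of_mem (hso : SOFormCoverage C) (hU : IsUpperStarRel S U) {A : C}
    {y : A ⟶ Y} {z : A ⟶ Z} (h : U.Mem y z) :
    ∃ (B : C) (e : B ⟶ A) (y' : B ⟶ Y) (z' : B ⟶ Z),
      IsSO e ∧ (e ≫ y) ≼ y' ∧ S.Mem z' y' ∧ z' ≼ (e ≫ z) := by
  obtain ⟨S1star, S2co, hS1star, hS2co, hcomp⟩ := hU
  obtain ⟨B, e, s, he, hys, hsz⟩ := hcomp.exists_mem_of_mem hso h
  exact ⟨B, e, s ≫ S.q, s ≫ S.p, he, hS2co.mem_iff.mp hys, S.mem_self.precomp s,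
    hS1star.mem_iff.mp hsz⟩

theorem op_sub (hU : IsUpperStarRel S U) : S.op.Sub U :=
  hU.mem_of_le (.refl _) S.mem_self (.refl _)

theorem exists_mem_comp_op_le_of_mem_comp (hso : SOFormCoverage C) (hU : IsUpperStarRel S U)
    {R : RelStr X Y} (hR : IsUpperRel R) {V V' : RelStr X Z} (hV : IsCompositeRel R S.op V)
    (hV' : IsCompositeRel R U V') {A : C} {x : A ⟶ X} {z : A ⟶ Z} (h : V'.Mem x z) :
    ∃ (B : C) (e : B ⟶ A) (z' : B ⟶ Z), IsSO e ∧ V.Mem (e ≫ x) z' ∧ z' ≼ (e ≫ z) := by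
  obtain ⟨B, e, y, he, hxy, hyz⟩ := hV'.exists_mem_of_mem hso h
  obtain ⟨D, f, y', z', hf, hy, hzy, hz⟩ := hU.exists_le_mem_le_of_mem hso hyz
  have hxz : V.Mem (f ≫ e ≫ x) z' := hV.mem (hR hy (hxy.precomp f)) (RelStr.mem_op_iff.mpr hzy)
  exact ⟨D, f ≫ e, z', hf.comp he, by rwa [Category.assoc], by rwa [Category.assoc]⟩

theorem comp_sub_comp_op [HasBinaryProduct X W] (hso : SOFormCoverage C) (hU : IsUpperStarRel S U)
    {R : RelStr X Y} (hR : IsUpperRel R) {T : RelStr Z W} (hT : IsLowerRel T) {V V' : RelStr X Z}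
    {Q Q' : RelStr X W} (hV : IsCompositeRel R S.op V) (hQ : IsCompositeRel V T Q)
    (hV' : IsCompositeRel R U V') (hQ' : IsCompositeRel V' T Q') : Q'.Sub Q := by
  refine hQ'.sub_of_forall_mem fun hxz hzw => ?_
  obtain ⟨B, e, z', he, hxz', hz⟩ := hU.exists_mem_comp_op_le_of_mem_comp hso hR hV hV' hxz
  exact .of_so he (hQ.mem hxz' (hT hz (hzw.precomp e)))

end IsUpperStarRel

theorem statement9_general [HasBinaryProducts C] (hso : SOFormCoverage C)
    {R : RelStr X Y} (hR : IsIdealRel R) {S : RelStr Z Y} {T : RelStr Z W} (hT : IsIdealRel T)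
    {A1 : RelStr X Z} (hA1 : IsCompositeRel R S.op A1)
    {A2 : RelStr X W} (hA2 : IsCompositeRel A1 T A2)
    {Supper : RelStr Y Z} (hSupper : IsUpperStarRel S Supper)
    {B1 : RelStr X Z} (hB1 : IsCompositeRel R Supper B1)
    {B2 : RelStr X W} (hB2 : IsCompositeRel B1 T B2) :
    A2.Iso B2 ∧ IsIdealRel A2 := by
  obtain ⟨hRlower, hRupper⟩ := isIdealRel_iff_isLowerRel_and_isUpperRel.mp hR
  obtain ⟨hTlower, hTupper⟩ := isIdealRel_iff_isLowerRel_and_isUpperRel.mp hT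
  have hA1B1 : A1.Sub B1 := hA1.sub_of_sub hB1 (.refl R) hSupper.op_sub
  have hA2B2 : A2.Sub B2 := hA2.sub_of_sub hB2 hA1B1 (.refl T)
  have hB2A2 : B2.Sub A2 := hSupper.comp_sub_comp_op hso hRupper hTlower hA1 hA2 hB1 hB2
  have hA2lower : IsLowerRel A2 := hA2.isLowerRel hso (hA1.isLowerRel hso hRlower)
  have hA2upper : IsUpperRel A2 := hA2.isUpperRel hso hTupper
  exact ⟨⟨hA2B2, hB2A2⟩, isIdealRel_iff_isLowerRel_and_isUpperRel.mpr ⟨hA2lower, hA2upper⟩⟩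

end

/-- `T ∘ S° ∘ R ≅ T ∘ S^* ∘ R`; in particular `T ∘ S° ∘ R` is an ideal. -/
theorem statement9 {C : Type u} [Category.{v} C] [OrdEnrichment C] (hC : IsRegularOrd C)
    {X Y Z W : C} (R : RelStr X Y) (hR : IsIdealRel R)
    (S : RelStr Z Y) (hS : IsIdealRel S)
    (T : RelStr Z W) (hT : IsIdealRel T)
    (A1 : RelStr X Z) (hA1 : IsCompositeRel R S.op A1)
    (A2 : RelStr X W) (hA2 : IsCompositeRel A1 T A2)
    -- `S^* = (s₁)_* ∘ (s₂)^*`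
    (S1star : RelStr S.obj Z) (hS1star : IsStarRel S.p S1star)
    (S2co : RelStr Y S.obj) (hS2co : IsCostarRel S.q S2co)
    (Supper : RelStr Y Z) (hSupper : IsCompositeRel S2co S1star Supper)
    (B1 : RelStr X Z) (hB1 : IsCompositeRel R Supper B1)
    (B2 : RelStr X W) (hB2 : IsCompositeRel B1 T B2) :
    A2.Iso B2 ∧ IsIdealRel A2 := by
  have := hC.hasBinaryProducts
  exact statement9_general hC.soFormCoverage hR hT hA1 hA2 ⟨S1star, S2co, hS1star, hS2co, hSupper⟩
    hB1 hB2
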